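/- Let 1 ≤ k ≤ n and let Z_1,…,Z_k be (k−1)-element subsets of {1,…,n} satisfying |⋂_{i∈I} Z_i| ≤ k − |I| for every nonempty subset I ⊆ {1,…,k}, and additionally satisfying |Z_i ∩ Z_{i′}| ≤ 1 for all i ≠ i′. Then for every finite field F_q with q ≥ n + k − 1 elements there exists a k×n matrix G over F_q such that G_{i,j} = 0 whenever j ∈ Z_i, and every set of k columns of G is linearly independent; that is, G generates an [n,k] MDS code whose generator matrix has zero entries at all the prescribed positions. (This settles the Simplified GM-MDS Conjecture in the case where the sets of zero coordinates of the rows pairwise share at most one element.) -/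

import Mathlib

/-!
For evaluation points `α_1, …, α_n`, let row `i` of `G` list the values at these points of
`p_i = ∏ l ∈ Z_i, (x - α_l)`. A `k × k` minor of `G` is the determinant of the coefficient matrix of
the `p_i` times a Vandermonde determinant, so all of them are nonzero once the `α_j` are distinct
and the coefficient determinant `D(α)` is nonzero. As every `j` lies in at most `k - 1` of the sets,
`D` has degree at most `k - 1` in each indeterminate and the Vandermonde determinant of the
indeterminates has degree `n - 1`; by the combinatorial Nullstellensatz, `n + k - 1` field elements
suffice if `D` is a nonzero polynomial.

That `D ≠ 0` means that the `p_i` with indeterminate roots are linearly independent. Following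
Lovett, one proves this with a multiple root `0` allowed as well, for all products `x ^ l * p_i` of
degree below `k`, by induction: cancel a common factor; if the intersection condition is an equality
for some set of indices, replace its polynomials by their greatest common divisor; otherwise set
some `X_j = 0`. When no useful `X_j` exists, the root `0` belongs to all polynomials but one, and
looking at the constant term removes it.
-/

open Finset Polynomial Function

section DegreeLTIndep

variable {R ι : Type*} [CommRing R] {T : Finset ι} {P : ι → R[X]} {d : ι → ℕ}

/-- The polynomials `P i`, `i ∈ T`, are independent with respect to coefficients of degree less
than `d i`; equivalently, the polynomials `x ^ l * P i` with `i ∈ T` and `l < d i` are linearly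
independent. -/
def DegreeLTIndep (T : Finset ι) (P : ι → R[X]) (d : ι → ℕ) : Prop :=
  ∀ q : ι → R[X], (∀ i ∈ T, q i ∈ degreeLT R (d i)) → ∑ i ∈ T, q i * P i = 0 → ∀ i ∈ T, q i = 0

theorem mul_mem_degreeLT {p q : R[X]} {m n : ℕ} (hp : p ∈ degreeLT R m)
    (hq : m + q.natDegree ≤ n) : p * q ∈ degreeLT R n := by
  rcases eq_or_ne p 0 with rfl | hp0
  · simp
  rw [mem_degreeLT, degree_eq_natDegree hp0, Nat.cast_lt] at hp
  refine mem_degreeLT.mpr (degree_le_natDegree.trans_lt (Nat.cast_lt.mpr ?_))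
  have := natDegree_mul_le (p := p) (q := q)
  lia

namespace DegreeLTIndep

theorem congr {P' : ι → R[X]} {d' : ι → ℕ} (h : DegreeLTIndep T P d)
    (hP : ∀ i ∈ T, P i = P' i) (hd : ∀ i ∈ T, d i = d' i) : DegreeLTIndep T P' d' := by
  intro q hq hsum
  refine h q (fun i hi => hd i hi ▸ hq i hi) ?_
  rw [← hsum]
  exact sum_congr rfl fun i hi => by rw [hP i hi]

theorem linearIndependent [Fintype ι] (h : DegreeLTIndep univ P fun _ => 1) :
    LinearIndependent R P := by
  rw [Fintype.linearIndependent_iff]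
  intro c hc i
  refine C_eq_zero.mp (h (fun i => C (c i)) (fun i _ => ?_) ?_ i (mem_univ i))
  · exact mem_degreeLT.mpr (degree_C_le.trans_lt (by norm_num))
  · simpa only [smul_eq_C_mul] using hc

theorem of_erase [DecidableEq ι] {i : ι} (hi : d i = 0) (h : DegreeLTIndep (T.erase i) P d) :
    DegreeLTIndep T P d := by
  intro q hq hsum
  have hqi : i ∈ T → q i = 0 := fun hiT => by simpa [mem_degreeLT, hi] using hq i hiT
  have hsum' : ∑ l ∈ T.erase i, q l * P l = 0 := by
    by_cases hiT : i ∈ T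
    · rw [sum_erase _ (by rw [hqi hiT, zero_mul]), hsum]
    · rw [erase_eq_of_notMem hiT, hsum]
  intro l hl
  obtain rfl | hli := eq_or_ne l i
  · exact hqi hl
  · exact h q (fun l hl => hq l (mem_of_mem_erase hl)) hsum' l (mem_erase.mpr ⟨hli, hl⟩)

theorem mul_left [IsDomain R] {L : R[X]} (hL : L ≠ 0) (h : DegreeLTIndep T P d) :
    DegreeLTIndep T (fun i => L * P i) d := by
  intro q hq hsum
  refine h q hq ((mul_eq_zero.mp ?_).resolve_left hL)
  rw [← hsum, mul_sum]
  exact sum_congr rfl fun i _ => mul_left_comm _ _ _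

/-- The part of a relation indexed by `I` has the form `g * L` with `deg g < D`. Independence with
`L` in place of the `P i`, `i ∈ I`, gives `g = 0`, and independence on `I` then applies. -/
theorem of_merge [DecidableEq ι] {I : Finset ι} {i₀ : ι} {L : R[X]} {Q : ι → R[X]} {D : ℕ}
    (hIT : I ⊆ T) (hi₀ : i₀ ∈ I) (hP : ∀ i ∈ I, P i = L * Q i)
    (hD : ∀ i ∈ I, d i + (Q i).natDegree ≤ D) (hI : DegreeLTIndep I P d)
    (hL : DegreeLTIndep (insert i₀ (T \ I)) (update P i₀ L) (update d i₀ D)) :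
    DegreeLTIndep T P d := by
  intro q hq hsum
  set g : R[X] := ∑ i ∈ I, q i * Q i with hg
  have hgsum : ∑ i ∈ I, q i * P i = g * L := by
    rw [hg, sum_mul]
    exact sum_congr rfl fun i hi => by rw [hP i hi]; ring
  have hgdeg : g ∈ degreeLT R D :=
    Submodule.sum_mem _ fun i hi => mul_mem_degreeLT (hq i (hIT hi)) (hD i hi)
  have hi₀' : i₀ ∉ T \ I := by simp [hi₀]
  have hne : ∀ i ∈ T \ I, i ≠ i₀ := fun i hi hii => hi₀' (hii ▸ hi)
  have hmerged : ∀ i ∈ insert i₀ (T \ I), update q i₀ g i = 0 := by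
    refine hL _ (forall_mem_insert _ _ _ |>.mpr ⟨by simpa using hgdeg, fun i hi => ?_⟩) ?_
    · simpa [hne i hi] using hq i (mem_sdiff.mp hi).1
    · rw [sum_insert hi₀', update_self, update_self, ← hgsum, ← hsum, ← sum_sdiff hIT, add_comm]
      congr 1
      exact sum_congr rfl fun i hi => by simp [hne i hi]
  have hg0 : g = 0 := by simpa using hmerged i₀ (mem_insert_self _ _)
  intro i hi
  by_cases hiI : i ∈ I
  · exact hI q (fun i hi => hq i (hIT hi)) (by rw [hgsum, hg0, zero_mul]) i hiI
  · have hmem : i ∈ T \ I := mem_sdiff.mpr ⟨hi, hiI⟩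
    simpa [hne i hmem] using hmerged i (mem_insert_of_mem hmem)

/-- Every coefficient of a relation vanishes under `φ`, hence is divisible by `a`. Dividing by `a`
gives another relation, so the coefficients are divisible by all powers of `a`. -/
theorem of_map [IsDomain R] {R' : Type*} [CommRing R'] (φ : R →+* R') {a : R} (ha : a ≠ 0)
    (hφ : ∀ r, φ r = 0 → a ∣ r) (hpow : ∀ r, (∀ N, a ^ N ∣ r) → r = 0)
    (h : DegreeLTIndep T (fun i => (P i).map φ) d) : DegreeLTIndep T P d := by
  have hdiv : ∀ q : ι → R[X], (∀ i ∈ T, q i ∈ degreeLT R (d i)) → ∑ i ∈ T, q i * P i = 0 →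
      ∀ i ∈ T, ∃ r, q i = C a * r := by
    intro q hq hsum i hi
    have hmap : (q i).map φ = 0 := by
      refine h (fun i => (q i).map φ) (fun i hi => ?_) ?_ i hi
      · exact mem_degreeLT.mpr (degree_map_le.trans_lt (mem_degreeLT.mp (hq i hi)))
      · simpa [Polynomial.map_sum] using congrArg (Polynomial.map φ) hsum
    exact (C_dvd_iff_dvd_coeff _ _).mpr fun l => hφ _ (by rw [← coeff_map, hmap, coeff_zero])
  have hdvd : ∀ N, ∀ q : ι → R[X], (∀ i ∈ T, q i ∈ degreeLT R (d i)) →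
      ∑ i ∈ T, q i * P i = 0 → ∀ i ∈ T, C (a ^ N) ∣ q i := by
    intro N
    induction N with
    | zero => simp
    | succ N ih =>
      intro q hq hsum
      choose! r hr using hdiv q hq hsum
      have hrdeg : ∀ i ∈ T, r i ∈ degreeLT R (d i) := fun i hi => by
        simpa [mem_degreeLT, hr i hi, degree_C_mul ha] using hq i hi
      have hrsum : ∑ i ∈ T, r i * P i = 0 := by
        refine (mul_eq_zero.mp ?_).resolve_left (C_ne_zero.mpr ha)
        rw [← hsum, mul_sum]
        exact sum_congr rfl fun i hi => by rw [hr i hi, mul_assoc]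
      intro i hi
      rw [hr i hi, pow_succ', C_mul]
      exact mul_dvd_mul_left _ (ih r hrdeg hrsum i hi)
  intro q hq hsum i hi
  ext l
  exact hpow _ fun N => (C_dvd_iff_dvd_coeff _ _).mp (hdvd N q hq hsum i hi) l

/-- Setting `x = 0` in a relation leaves only the term at `i₀`, so `x` divides `q i₀`. -/
theorem update_X_mul [IsDomain R] [DecidableEq ι] {i₀ : ι} (hi₀ : i₀ ∈ T)
    (h0 : (P i₀).coeff 0 ≠ 0) (h : DegreeLTIndep T P d) :
    DegreeLTIndep T (update (fun i => X * P i) i₀ (P i₀)) (update d i₀ (d i₀ + 1)) := by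
  intro q hq hsum
  have hq0 : (q i₀).coeff 0 = 0 := by
    have hcoeff := congrArg (coeff · 0) hsum
    rw [finsetSum_coeff, sum_eq_single_of_mem i₀ hi₀ fun i _ hii => by simp [hii]] at hcoeff
    simpa [h0] using hcoeff
  obtain ⟨r, hr⟩ := X_dvd_iff.mpr hq0
  have hq' : ∀ i ∈ T, update q i₀ r i = 0 := by
    refine h _ (fun i hi => ?_) ((mul_eq_zero.mp ?_).resolve_left (X_ne_zero (R := R)))
    · obtain rfl | hii := eq_or_ne i i₀
      · have hX := hq i hi
        rcases eq_or_ne r 0 with hr0 | hr0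
        · simp [hr0]
        · rw [update_self, hr, mem_degreeLT,
            degree_eq_natDegree (mul_ne_zero X_ne_zero hr0), natDegree_X_mul hr0] at hX
          rw [update_self, mem_degreeLT, degree_eq_natDegree hr0]
          exact_mod_cast Nat.lt_of_succ_lt_succ (Nat.cast_lt.mp hX)
      · simpa [hii] using hq i hi
    · rw [← hsum, mul_sum]
      refine sum_congr rfl fun i _ => ?_
      obtain rfl | hii := eq_or_ne i i₀
      · simp only [update_self, hr]; ring
      · simp only [update_of_ne hii]; ring
  intro i hi
  obtain rfl | hii := eq_or_ne i i₀
  · rw [hr, ← update_self i r q, hq' i hi, mul_zero]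
  · simpa [hii] using hq' i hi

end DegreeLTIndep

end DegreeLTIndep

/-! ### Killing a variable -/

section KillVar

variable {R σ : Type*} [CommRing R]

theorem eq_zero_of_forall_X_pow_dvd {j : σ} {f : MvPolynomial σ R}
    (hf : ∀ N, MvPolynomial.X j ^ N ∣ f) : f = 0 := by
  by_contra hf0
  obtain ⟨g, hg⟩ := hf (f.degreeOf j + 1)
  have hg0 : g ≠ 0 := fun h => hf0 (by rw [hg, h, mul_zero])
  have := MvPolynomial.degreeOf_mul_X_self_pow_eq_add_of_ne_zero j (f.degreeOf j + 1) hg0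
  rw [mul_comm, ← hg] at this
  lia

variable [DecidableEq σ]

/-- The substitution `X_j ↦ 0` fixing all other variables. -/
noncomputable def killVar (R : Type*) [CommRing R] (j : σ) :
    MvPolynomial σ R →ₐ[R] MvPolynomial σ R :=
  MvPolynomial.aeval (update MvPolynomial.X j 0)

@[simp]
theorem killVar_X_self (j : σ) : killVar R j (MvPolynomial.X j) = 0 := by
  simp [killVar]

theorem killVar_X_of_ne {i j : σ} (hij : i ≠ j) :
    killVar R j (MvPolynomial.X i) = MvPolynomial.X i := by
  simp [killVar, hij]

/-- Modulo `X_j`, the substitution `X_j ↦ 0` is the identity. -/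
theorem X_dvd_of_killVar_eq_zero {j : σ} {f : MvPolynomial σ R} (hf : killVar R j f = 0) :
    MvPolynomial.X j ∣ f := by
  set J : Ideal (MvPolynomial σ R) := Ideal.span {MvPolynomial.X j} with hJ
  have hmk : (Ideal.Quotient.mkₐ R J).comp (killVar R j) = Ideal.Quotient.mkₐ R J := by
    refine MvPolynomial.algHom_ext fun i => ?_
    obtain rfl | hij := eq_or_ne i j
    · simpa using (Ideal.Quotient.eq_zero_iff_mem.mpr (Ideal.mem_span_singleton_self _)).symm
    · simp [killVar_X_of_ne hij]
  rw [← Ideal.mem_span_singleton, ← hJ, ← Ideal.Quotient.eq_zero_iff_mem]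
  simpa [hf] using (DFunLike.congr_fun hmk f).symm

end KillVar

/-! ### Root data and the intersection condition -/

/-- Prescribed roots of a polynomial in one variable over a ring of polynomials in indeterminates
`X_j`, `j : σ`: the pair `(S, e)` stands for the simple roots `X_j`, `j ∈ S`, and the root `0` with
multiplicity `e`. The order is componentwise. -/
abbrev RootData (σ : Type*) := Finset σ × ℕ

namespace RootData

variable {R σ : Type*} [CommRing R] {a b : RootData σ}

/-- The number of prescribed roots, with multiplicity. -/
def size (a : RootData σ) : ℕ := #a.1 + a.2

/-- The product `x ^ e * ∏ j ∈ S, (x - X_j)`. -/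
noncomputable def poly (R : Type*) [CommRing R] (a : RootData σ) : (MvPolynomial σ R)[X] :=
  X ^ a.2 * ∏ j ∈ a.1, (X - C (MvPolynomial.X j))

/-- The single root `0`. -/
def zeroRoot : RootData σ := (∅, 1)

/-- The roots of `a` that remain after those of `b` are cancelled. -/
def diff [DecidableEq σ] (a b : RootData σ) : RootData σ := (a.1 \ b.1, a.2 - b.2)

/-- The effect of `X_j = 0` on prescribed roots: a root `X_j` becomes a root `0`. -/
def kill [DecidableEq σ] (j : σ) (a : RootData σ) : RootData σ :=
  (a.1.erase j, if j ∈ a.1 then a.2 + 1 else a.2)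

theorem size_mono (h : b ≤ a) : b.size ≤ a.size :=
  add_le_add (card_le_card h.1) h.2

@[simp]
theorem size_zeroRoot : (zeroRoot : RootData σ).size = 1 := rfl

theorem zeroRoot_le_iff : zeroRoot ≤ a ↔ a.2 ≠ 0 := by
  simp [zeroRoot, Prod.le_def, Nat.one_le_iff_ne_zero]

@[simp]
theorem poly_zeroRoot : (zeroRoot : RootData σ).poly R = X := by
  simp [poly, zeroRoot]

theorem natDegree_poly [Nontrivial R] (a : RootData σ) : (a.poly R).natDegree = a.size := by
  have hprod : (∏ j ∈ a.1, (X - C (MvPolynomial.X j : MvPolynomial σ R))).Monic :=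
    monic_prod_X_sub_C _ _
  rw [poly, (monic_X_pow a.2).natDegree_mul hprod, natDegree_X_pow,
    natDegree_finsetProd_X_sub_C_eq_card, size, add_comm]

theorem poly_ne_zero [Nontrivial R] (a : RootData σ) : a.poly R ≠ 0 :=
  ((monic_X_pow a.2).mul (monic_prod_X_sub_C _ _)).ne_zero

theorem coeff_zero_poly_ne_zero [IsDomain R] (h : a.2 = 0) : (a.poly R).coeff 0 ≠ 0 := by
  rw [poly, h, pow_zero, one_mul, coeff_zero_prod]
  exact prod_ne_zero_iff.mpr fun j _ => by simp [MvPolynomial.X_ne_zero]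

variable [DecidableEq σ]

theorem poly_eq_mul_diff (h : b ≤ a) : a.poly R = b.poly R * (a.diff b).poly R := by
  simp only [poly, diff]
  rw [← prod_sdiff h.1, ← pow_sub_mul_pow X h.2]
  ring

theorem diff_le (a b : RootData σ) : a.diff b ≤ a :=
  ⟨sdiff_subset, Nat.sub_le _ _⟩

theorem diff_zeroRoot (h : a.2 = 0) : a.diff zeroRoot = a := by
  ext <;> simp [diff, zeroRoot, h]

theorem size_diff_add (h : b ≤ a) : (a.diff b).size + b.size = a.size := by
  have := card_sdiff_add_card_eq_card h.1
  have := h.2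
  simp only [size, diff]
  lia

@[simp]
theorem size_kill (j : σ) (a : RootData σ) : (a.kill j).size = a.size := by
  simp only [size, kill]
  split_ifs with hj
  · have := card_erase_add_one hj
    lia
  · rw [erase_eq_of_notMem hj]

theorem map_killVar_poly (j : σ) (a : RootData σ) :
    (a.poly R).map (killVar R j : MvPolynomial σ R →+* MvPolynomial σ R) = (a.kill j).poly R := by
  have hfix : ∏ i ∈ a.1.erase j, (X - C (killVar R j (MvPolynomial.X i))) =
      ∏ i ∈ a.1.erase j, (X - C (MvPolynomial.X i)) :=
    prod_congr rfl fun i hi => by rw [killVar_X_of_ne (ne_of_mem_erase hi)]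
  simp only [poly, kill, Polynomial.map_mul, Polynomial.map_pow, Polynomial.map_prod,
    Polynomial.map_sub, map_X, map_C, RingHom.coe_coe]
  split_ifs with hj
  · rw [← mul_prod_erase _ _ hj, hfix, killVar_X_self]
    simp only [map_zero, sub_zero]
    ring
  · rw [← hfix, erase_eq_of_notMem hj]

end RootData

/-- The intersection condition at level `k` for the root data `a i`, `i ∈ T`. The minimum of the
`a i` over `I` is replaced by an arbitrary lower bound `b`. The truncated subtraction is harmless:
for `I = {i}` and `b = a i` the condition says `(a i).size ≤ k`. -/
def GMAdmissible {σ ι : Type*} (k : ℕ) (T : Finset ι) (a : ι → RootData σ) : Prop :=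
  ∀ I ⊆ T, I.Nonempty → ∀ b : RootData σ, (∀ i ∈ I, b ≤ a i) →
    ∑ i ∈ I, (k - (a i).size) + b.size ≤ k

/-- Equality in the intersection condition at level `k`, for the index set `I` and the common lower
bound `b`. -/
structure GMTight {σ ι : Type*} (k : ℕ) (I : Finset ι) (a : ι → RootData σ) (b : RootData σ) :
    Prop where
  le : ∀ i ∈ I, b ≤ a i
  sum_add_size : ∑ i ∈ I, (k - (a i).size) + b.size = k

namespace GMAdmissible

variable {σ ι : Type*} {k : ℕ} {T I : Finset ι} {a : ι → RootData σ} {b : RootData σ} {i i₀ : ι}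

theorem mono (h : GMAdmissible k T a) (hI : I ⊆ T) : GMAdmissible k I a :=
  fun J hJ => h J (hJ.trans hI)

theorem size_le (h : GMAdmissible k T a) (hi : i ∈ T) : (a i).size ≤ k := by
  have := h {i} (singleton_subset_iff.mpr hi) (singleton_nonempty i) (a i) (by simp)
  rw [sum_singleton] at this
  lia

/-- The condition for the pair `{i, i₀}` and the lower bound `a i`. -/
theorem size_eq_of_le (h : GMAdmissible k T a) (hi : i ∈ T) (hi₀ : i₀ ∈ T)
    (hii : i ≠ i₀) (hle : a i ≤ a i₀) : (a i₀).size = k := by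
  classical
  have hpair := h {i, i₀} (insert_subset hi (singleton_subset_iff.mpr hi₀)) (insert_nonempty _ _)
    (a i) (by simpa using hle)
  rw [sum_pair hii] at hpair
  have := h.size_le hi
  have := h.size_le hi₀
  lia

theorem diff [DecidableEq σ] (h : GMAdmissible k T a) (hb : ∀ i ∈ T, b ≤ a i) :
    GMAdmissible (k - b.size) T fun i => (a i).diff b := by
  intro I hI hne c hc
  set bc : RootData σ := (b.1 ∪ c.1, b.2 + c.2) with hbc
  have hsize : bc.size = b.size + c.size := by
    obtain ⟨i, hi⟩ := hne
    have hdisj : Disjoint b.1 c.1 := disjoint_sdiff.mono_right (hc i hi).1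
    simp only [hbc, RootData.size, card_union_of_disjoint hdisj]
    ring
  have hle : ∀ i ∈ I, bc ≤ a i := fun i hi => by
    have hb₂ := (hb i (hI hi)).2
    have hc₂ : c.2 ≤ (a i).2 - b.2 := (hc i hi).2
    exact ⟨union_subset (hb i (hI hi)).1 ((hc i hi).1.trans sdiff_subset),
      show b.2 + c.2 ≤ (a i).2 by lia⟩
  have hsum : ∑ i ∈ I, (k - b.size - ((a i).diff b).size) = ∑ i ∈ I, (k - (a i).size) :=
    sum_congr rfl fun i hi => by
      have := RootData.size_diff_add (hb i (hI hi))
      lia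
  have := h I hI hne bc hle
  lia

/-- A set `J` of indices containing the merged index `i₀` has the same sum as `J ∪ I`. -/
theorem merge [DecidableEq ι] (h : GMAdmissible k T a) (hI : I ⊆ T) (hi₀ : i₀ ∈ I)
    (hb : GMTight k I a b) : GMAdmissible k (insert i₀ (T \ I)) (update a i₀ b) := by
  intro J hJ hne c hc
  have hmem : ∀ i ∈ J.erase i₀, i ∈ T ∧ i ∉ I := fun i hi => by
    simpa [ne_of_mem_erase hi] using hJ (mem_of_mem_erase hi)
  have hle : ∀ i ∈ J.erase i₀, c ≤ a i := fun i hi => by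
    simpa [ne_of_mem_erase hi] using hc i (mem_of_mem_erase hi)
  have hsum : ∑ i ∈ J.erase i₀, (k - (update a i₀ b i).size) =
      ∑ i ∈ J.erase i₀, (k - (a i).size) :=
    sum_congr rfl fun i hi => by rw [update_of_ne (ne_of_mem_erase hi)]
  by_cases hJ₀ : i₀ ∈ J
  · have hcb : c ≤ b := by simpa using hc i₀ hJ₀
    have hdisj : Disjoint (J.erase i₀) I := disjoint_left.mpr fun i hi => (hmem i hi).2
    have hunion := h (J.erase i₀ ∪ I) (union_subset (fun i hi => (hmem i hi).1) hI)
      ⟨i₀, mem_union_right _ hi₀⟩ c fun i hi =>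
        (mem_union.mp hi).elim (hle i) fun hi => hcb.trans (hb.le i hi)
    rw [sum_union hdisj] at hunion
    rw [← sum_erase_add J _ hJ₀, hsum, update_self]
    have := hb.sum_add_size
    lia
  · rw [erase_eq_of_notMem hJ₀] at hmem hle hsum
    rw [hsum]
    exact h J (fun i hi => (hmem i hi).1) hne c hle

/-- Setting `X_j = 0` raises the multiplicity of a common root `0` over `I` by at most one. This is
harmless when `I` is not tight, when `I` is a singleton, and when `I = T`, since `0` is still not a
root of the polynomial at `i₀`. -/
theorem kill [DecidableEq σ] (h : GMAdmissible k T a)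
    (hloose : ∀ I ⊆ T, 1 < #I → #I < #T → ∀ b, ¬GMTight k I a b)
    (hi₀ : i₀ ∈ T) (he : (a i₀).2 = 0) {j : σ} (hj : j ∉ (a i₀).1) :
    GMAdmissible k T fun i => (a i).kill j := by
  intro I hI hne c hc
  have hle : ∀ i ∈ I, ((c.1, c.2 - 1) : RootData σ) ≤ a i := fun i hi => by
    have hc₂ : c.2 ≤ if j ∈ (a i).1 then (a i).2 + 1 else (a i).2 := (hc i hi).2
    refine ⟨(hc i hi).1.trans (erase_subset _ _), show c.2 - 1 ≤ (a i).2 from ?_⟩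
    split_ifs at hc₂ <;> lia
  have hpred := h I hI hne _ hle
  have hsize : c.size ≤ RootData.size ((c.1, c.2 - 1) : RootData σ) + 1 := by
    simp only [RootData.size]
    lia
  simp only [RootData.size_kill]
  obtain hone | hone : #I = 1 ∨ 1 < #I := by
    have := hne.card_pos
    lia
  · obtain ⟨i, rfl⟩ := card_eq_one.mp hone
    have := h.size_le (hI (mem_singleton_self i))
    have := RootData.size_mono (hc i (mem_singleton_self i))
    rw [RootData.size_kill] at this
    rw [sum_singleton]
    lia
  rcases (card_le_card hI).lt_or_eq with hall | hall
  · have : ∑ i ∈ I, (k - (a i).size) + RootData.size ((c.1, c.2 - 1) : RootData σ) ≠ k :=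
      fun heq => hloose I hI hone hall _ ⟨hle, heq⟩
    lia
  · obtain rfl := eq_of_subset_of_card_le hI hall.ge
    have hc0 : c.2 ≤ 0 := by simpa [RootData.kill, hj, he] using (hc i₀ hi₀).2
    simp only [RootData.size] at hpred ⊢
    lia

theorem peel [DecidableEq σ] (h : GMAdmissible k T a) (hk : (a i₀).size < k)
    (he₀ : (a i₀).2 = 0) (he : ∀ i ∈ T, i ≠ i₀ → RootData.zeroRoot ≤ a i) :
    GMAdmissible (k - 1) T fun i => (a i).diff RootData.zeroRoot := by
  classical
  intro I hI hne c hc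
  by_cases hI₀ : i₀ ∈ I
  · have hsum : ∑ i ∈ I.erase i₀, (k - 1 - ((a i).diff RootData.zeroRoot).size) =
        ∑ i ∈ I.erase i₀, (k - (a i).size) := sum_congr rfl fun i hi => by
      have := RootData.size_diff_add (he i (hI (mem_of_mem_erase hi)) (ne_of_mem_erase hi))
      rw [RootData.size_zeroRoot] at this
      lia
    have hle := h I hI hne c fun i hi => (hc i hi).trans (RootData.diff_le _ _)
    rw [← add_sum_erase I _ hI₀] at hle
    have hdiff := RootData.diff_zeroRoot he₀
    rw [← add_sum_erase I _ hI₀, hsum]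
    lia
  · have hIT : I ⊆ T.erase i₀ := subset_erase.mpr ⟨hI, hI₀⟩
    exact (h.mono (erase_subset i₀ T)).diff
      (fun i hi => he i (mem_of_mem_erase hi) (ne_of_mem_erase hi)) I hIT hne c hc

theorem exists_zeroRoot_le_or_mem (h : GMAdmissible k T a) (hlt : ∀ i ∈ T, (a i).size < k)
    (hcommon : ¬∃ b : RootData σ, 0 < b.size ∧ ∀ i ∈ T, b ≤ a i) :
    ∃ i₀ ∈ T, (a i₀).2 = 0 ∧ ((∀ i ∈ T, i ≠ i₀ → RootData.zeroRoot ≤ a i) ∨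
      ∃ i ∈ T, ∃ j ∈ (a i).1, j ∉ (a i₀).1) := by
  obtain ⟨i₀, hi₀, he₀⟩ : ∃ i₀ ∈ T, (a i₀).2 = 0 := by
    by_contra! he
    exact hcommon ⟨.zeroRoot, by simp, fun i hi => RootData.zeroRoot_le_iff.mpr (he i hi)⟩
  refine ⟨i₀, hi₀, he₀, or_iff_not_imp_right.mpr fun hsub i hi hii => ?_⟩
  push Not at hsub
  refine RootData.zeroRoot_le_iff.mpr fun hi0 => (hlt i₀ hi₀).ne ?_
  exact h.size_eq_of_le hi hi₀ hii ⟨fun j hj => hsub i hi j hj, hi0.trans_le (Nat.zero_le _)⟩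

end GMAdmissible

/-! ### Independence under the intersection condition -/

/-- Independence of the polynomials with root data `a i`, `i ∈ T`, with respect to coefficients
that leave the degree of each product below `k`. -/
def GMIndep (R : Type*) [CommRing R] {σ ι : Type*} (k : ℕ) (T : Finset ι) (a : ι → RootData σ) :
    Prop :=
  DegreeLTIndep T (fun i => (a i).poly R) fun i => k - (a i).size

namespace GMIndep

variable {R σ ι : Type*} [CommRing R] {k : ℕ} {T I : Finset ι} {a : ι → RootData σ}
  {b : RootData σ} {i₀ : ι}

theorem of_diff [IsDomain R] [DecidableEq σ] (hb : ∀ i ∈ T, b ≤ a i)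
    (h : GMIndep R (k - b.size) T fun i => (a i).diff b) : GMIndep R k T a :=
  (h.mul_left b.poly_ne_zero).congr (fun i hi => (RootData.poly_eq_mul_diff (hb i hi)).symm)
    fun i hi => by
      have := RootData.size_diff_add (hb i hi)
      lia

theorem of_merge [Nontrivial R] [DecidableEq ι] (hadm : GMAdmissible k T a) (hIT : I ⊆ T)
    (hi₀ : i₀ ∈ I) (hb : GMTight k I a b) (hI : GMIndep R k I a)
    (h : GMIndep R k (insert i₀ (T \ I)) (update a i₀ b)) : GMIndep R k T a := by
  classical
  refine DegreeLTIndep.of_merge hIT hi₀ (fun i hi => RootData.poly_eq_mul_diff (hb.le i hi))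
    (D := ∑ i ∈ I, (k - (a i).size)) (fun i hi => ?_) hI (h.congr (fun i _ => ?_) fun i _ => ?_)
  · have := hadm.size_le (hIT hi)
    have := RootData.size_diff_add (hb.le i hi)
    have := hb.sum_add_size
    rw [RootData.natDegree_poly]
    lia
  · exact apply_update (fun _ a => a.poly R) a i₀ b i
  · rw [show ∑ i ∈ I, (k - (a i).size) = k - b.size by have := hb.sum_add_size; lia]
    exact apply_update (fun _ a => k - a.size) a i₀ b i

theorem of_kill [IsDomain R] [DecidableEq σ] (j : σ) (h : GMIndep R k T fun i => (a i).kill j) :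
    GMIndep R k T a :=
  DegreeLTIndep.of_map (killVar R j : MvPolynomial σ R →+* MvPolynomial σ R)
    (MvPolynomial.X_ne_zero j) (fun _ => X_dvd_of_killVar_eq_zero)
    (fun _ => eq_zero_of_forall_X_pow_dvd)
    (h.congr (fun i _ => (RootData.map_killVar_poly j (a i)).symm) fun i _ => by simp)

theorem of_peel [IsDomain R] [DecidableEq σ] (hi₀ : i₀ ∈ T) (hk : (a i₀).size < k)
    (he₀ : (a i₀).2 = 0) (he : ∀ i ∈ T, i ≠ i₀ → RootData.zeroRoot ≤ a i)
    (h : GMIndep R (k - 1) T fun i => (a i).diff RootData.zeroRoot) : GMIndep R k T a := by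
  classical
  have hdiff := RootData.diff_zeroRoot he₀
  have hcoeff : (((a i₀).diff RootData.zeroRoot).poly R).coeff 0 ≠ 0 := by
    rw [hdiff]
    exact RootData.coeff_zero_poly_ne_zero he₀
  refine (h.update_X_mul hi₀ hcoeff).congr (fun i hi => ?_) fun i hi => ?_
  · obtain rfl | hii := eq_or_ne i i₀
    · simp only [update_self, hdiff]
    · rw [update_of_ne hii, RootData.poly_eq_mul_diff (he i hi hii), RootData.poly_zeroRoot]
  · obtain rfl | hii := eq_or_ne i i₀
    · simp only [update_self, hdiff]
      lia
    · have := RootData.size_diff_add (he i hi hii)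
      rw [RootData.size_zeroRoot] at this
      rw [update_of_ne hii]
      lia

end GMIndep

/-- Strong induction on `k + #T + #A`, where the finite set `A` contains all indeterminates that
occur. -/
theorem GMAdmissible.gmIndep (R : Type*) [CommRing R] [IsDomain R] {σ ι : Type*} {k : ℕ}
    {T : Finset ι} {a : ι → RootData σ} (h : GMAdmissible k T a) : GMIndep R k T a := by
  classical
  obtain ⟨A, hA⟩ : ∃ A : Finset σ, ∀ i ∈ T, (a i).1 ⊆ A :=
    ⟨T.sup fun i => (a i).1, fun i hi => le_sup (f := fun i => (a i).1) hi⟩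
  induction hN : k + #T + #A using Nat.strong_induction_on generalizing k T a A with | _ N ih
  subst hN
  rcases T.eq_empty_or_nonempty with rfl | hne
  · exact fun q _ _ i hi => absurd hi (notMem_empty i)
  by_cases hfull : ∃ i ∈ T, (a i).size = k
  · obtain ⟨i, hi, hik⟩ := hfull
    have := card_erase_lt_of_mem hi
    exact .of_erase (by simp [hik]) (ih _ (by lia) (h.mono (erase_subset i T)) A
      (fun l hl => hA l (mem_of_mem_erase hl)) rfl)
  have hlt : ∀ i ∈ T, (a i).size < k := fun i hi =>
    (h.size_le hi).lt_of_ne fun hik => hfull ⟨i, hi, hik⟩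
  by_cases hcommon : ∃ b : RootData σ, 0 < b.size ∧ ∀ i ∈ T, b ≤ a i
  · obtain ⟨b, hb0, hb⟩ := hcommon
    obtain ⟨i, hi⟩ := hne
    have := hlt i hi
    exact .of_diff hb (ih _ (by lia) (h.diff hb) A
      (fun i hi => (RootData.diff_le (a i) b).1.trans (hA i hi)) rfl)
  by_cases htight : ∃ I ⊆ T, 1 < #I ∧ #I < #T ∧ ∃ b, GMTight k I a b
  · obtain ⟨I, hIT, hI1, hI2, b, hb⟩ := htight
    obtain ⟨i₀, hi₀⟩ : I.Nonempty := card_pos.mp (by lia)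
    have hcard : #(insert i₀ (T \ I)) < #T := by
      have := card_insert_le i₀ (T \ I)
      rw [card_sdiff_of_subset hIT] at this
      lia
    refine .of_merge h hIT hi₀ hb (ih _ (by lia) (h.mono hIT) A (fun i hi => hA i (hIT hi)) rfl)
      (ih _ (by lia) (h.merge hIT hi₀ hb) A (fun i hi => ?_) rfl)
    obtain rfl | hii := eq_or_ne i i₀
    · simpa using (hb.le i hi₀).1.trans (hA i (hIT hi₀))
    · simpa [hii] using hA i (mem_sdiff.mp (mem_of_mem_insert_of_ne hi hii)).1
  obtain ⟨i₀, hi₀, he₀, he | ⟨i, hi, j, hji, hj⟩⟩ := h.exists_zeroRoot_le_or_mem hlt hcommon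
  · have := hlt i₀ hi₀
    exact .of_peel hi₀ this he₀ he (ih _ (by lia) (h.peel this he₀ he) A
      (fun i hi => (RootData.diff_le (a i) _).1.trans (hA i hi)) rfl)
  · have := card_erase_lt_of_mem (hA i hi hji)
    refine .of_kill j (ih _ (by lia) (h.kill ?_ hi₀ he₀ hj) (A.erase j)
      (fun i hi => erase_subset_erase j (hA i hi)) rfl)
    exact fun I hI h1 h2 b hb => htight ⟨I, hI, h1, h2, b, hb⟩

theorem gmAdmissible_of_card_inf_le {σ ι : Type*} [Fintype σ] [DecidableEq σ] {k : ℕ}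
    {T : Finset ι} {Z : ι → Finset σ} (hZ : ∀ i ∈ T, #(Z i) + 1 = k)
    (hint : ∀ I ⊆ T, I.Nonempty → #(I.inf Z) + #I ≤ k) :
    GMAdmissible k T fun i => (Z i, 0) := by
  intro I hI hne b hb
  have hb₁ : #b.1 ≤ #(I.inf Z) := card_le_card (Finset.le_inf fun i hi => (hb i hi).1)
  have hb₂ : b.2 = 0 := by
    obtain ⟨i, hi⟩ := hne
    exact Nat.le_zero.mp (hb i hi).2
  have hsum : ∑ i ∈ I, (k - RootData.size (Z i, 0)) = #I := by
    rw [card_eq_sum_ones]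
    refine sum_congr rfl fun i hi => ?_
    have := hZ i (hI hi)
    simp only [RootData.size]
    lia
  have := hint I hI hne
  simp only [RootData.size] at hsum ⊢
  lia

/-! ### Coefficient matrices -/

section CoeffMatrix

variable {R ι : Type*} [CommRing R]

/-- The matrix whose row `i` lists the coefficients of `1, x, …, x ^ (m - 1)` in `p i`. -/
def coeffMatrix (p : ι → R[X]) (m : ℕ) : Matrix ι (Fin m) R :=
  .of fun i l => (p i).coeff l

variable {k : ℕ} {p : Fin k → R[X]}

theorem det_coeffMatrix_map {R' : Type*} [CommRing R'] (φ : R →+* R') (p : Fin k → R[X]) :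
    (coeffMatrix (fun i => (p i).map φ) k).det = φ (coeffMatrix p k).det := by
  rw [RingHom.map_det]
  congr 1
  ext i l
  simp [coeffMatrix]

theorem det_coeffMatrix_ne_zero [IsDomain R] (hp : ∀ i, (p i).natDegree < k)
    (hind : LinearIndependent R p) : (coeffMatrix p k).det ≠ 0 := by
  intro hdet
  obtain ⟨v, hv, hvM⟩ := Matrix.exists_vecMul_eq_zero_iff.mpr hdet
  refine hv (funext (Fintype.linearIndependent_iff.mp hind v ?_))
  ext l
  by_cases hl : l < k
  · simpa [finsetSum_coeff, Matrix.vecMul, dotProduct, coeffMatrix] using congrFun hvM ⟨l, hl⟩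
  · have hzero : ∀ i, (p i).coeff l = 0 := fun i =>
      coeff_eq_zero_of_natDegree_lt ((hp i).trans_le (not_lt.mp hl))
    simp [finsetSum_coeff, hzero]

/-- The matrix of values is the product of the coefficient matrix and a Vandermonde matrix. -/
theorem linearIndependent_eval [IsDomain R] (hp : ∀ i, (p i).natDegree < k)
    (hdet : (coeffMatrix p k).det ≠ 0) [Fintype ι] (hι : Fintype.card ι = k) {β : ι → R}
    (hβ : Injective β) : LinearIndependent R fun j i => (p i).eval (β j) := by
  let e : Fin k ≃ ι := (Fintype.equivFinOfCardEq hι).symm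
  rw [← linearIndependent_equiv e]
  have hfactor : Matrix.of (fun i j => (p i).eval (β (e j))) =
      coeffMatrix p k * (Matrix.vandermonde (β ∘ e)).transpose := by
    ext i j
    rw [Matrix.of_apply, eval_eq_sum_range' (hp i), ← Fin.sum_univ_eq_sum_range
      (fun l => (p i).coeff l * β (e j) ^ l), Matrix.mul_apply]
    rfl
  have hne : (Matrix.of fun i j => (p i).eval (β (e j))).det ≠ 0 := by
    rw [hfactor, Matrix.det_mul, Matrix.det_transpose]
    exact mul_ne_zero hdet (Matrix.det_vandermonde_ne_zero_iff.mpr (hβ.comp e.injective))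
  exact Matrix.linearIndependent_cols_of_det_ne_zero hne

theorem det_coeffMatrix_poly_ne_zero [IsDomain R] {σ : Type*} [Fintype σ] [DecidableEq σ]
    {Z : Fin k → Finset σ} (hZ : ∀ i, #(Z i) + 1 = k)
    (hint : ∀ I : Finset (Fin k), I.Nonempty → #(I.inf Z) + #I ≤ k) :
    (coeffMatrix (fun i => RootData.poly R (Z i, 0)) k).det ≠ 0 := by
  have hsize : ∀ i, RootData.size (Z i, 0) + 1 = k := hZ
  have hadm : GMAdmissible k univ fun i => ((Z i, 0) : RootData σ) :=
    gmAdmissible_of_card_inf_le (fun i _ => hZ i) fun I _ => hint I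
  have hindep : DegreeLTIndep univ (fun i => RootData.poly R (Z i, 0)) fun _ => 1 :=
    (hadm.gmIndep R).congr (fun _ _ => rfl) fun i _ => by
      have := hsize i
      lia
  refine det_coeffMatrix_ne_zero (fun i => ?_) hindep.linearIndependent
  have := hsize i
  rw [RootData.natDegree_poly]
  lia

end CoeffMatrix

/-! ### Degrees in one variable and evaluation points -/

section DegreeOf

variable {R σ ι : Type*} [CommRing R]

theorem degreeOf_det_le [Fintype ι] [DecidableEq ι] {M : Matrix ι ι (MvPolynomial σ R)} {j : σ}
    {b : ι → ℕ} (h : ∀ i l, (M i l).degreeOf j ≤ b i) : M.det.degreeOf j ≤ ∑ i, b i := by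
  rw [← Matrix.det_transpose, Matrix.det_apply]
  refine (MvPolynomial.degreeOf_sum_le _ _ _).trans (Finset.sup_le fun π _ => ?_)
  have hprod : (∏ i, M.transpose (π i) i).degreeOf j ≤ ∑ i, b i :=
    (MvPolynomial.degreeOf_prod_le _ _ _).trans (sum_le_sum fun i _ => h i (π i))
  rcases Int.units_eq_one_or (Equiv.Perm.sign π) with hs | hs
  · rwa [hs, one_smul]
  · rwa [hs, Units.neg_smul, one_smul, MvPolynomial.degreeOf_neg]

theorem degreeOf_coeff_prod_le {s : Finset ι} {p : ι → (MvPolynomial σ R)[X]} {j : σ} {b : ι → ℕ}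
    (h : ∀ i ∈ s, ∀ l, ((p i).coeff l).degreeOf j ≤ b i) (l : ℕ) :
    ((∏ i ∈ s, p i).coeff l).degreeOf j ≤ ∑ i ∈ s, b i := by
  classical
  induction s using Finset.induction_on generalizing l with
  | empty =>
    rw [prod_empty, coeff_one]
    split_ifs <;> simp
  | insert i s hi ih =>
    rw [prod_insert hi, sum_insert hi, coeff_mul]
    refine (MvPolynomial.degreeOf_sum_le _ _ _).trans (Finset.sup_le fun x _ => ?_)
    exact (MvPolynomial.degreeOf_mul_le _ _ _).trans (add_le_add (h i (mem_insert_self i s) _)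
      (ih (fun i hi => h i (mem_insert_of_mem hi)) _))

theorem degreeOf_coeff_poly_le [Nontrivial R] [DecidableEq σ] (S : Finset σ) (j : σ) (l : ℕ) :
    ((RootData.poly R (S, 0)).coeff l).degreeOf j ≤ if j ∈ S then 1 else 0 := by
  rw [RootData.poly, pow_zero, one_mul, ← sum_ite_eq S j fun _ => 1]
  refine degreeOf_coeff_prod_le (fun i _ l => ?_) l
  rw [coeff_sub, coeff_X, coeff_C]
  refine (MvPolynomial.degreeOf_sub_le _ _ _).trans ?_
  split_ifs <;> simp_all [MvPolynomial.degreeOf_X]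

theorem degreeOf_det_vandermonde_X_le [Nontrivial R] {n : ℕ} (j : Fin n) :
    (Matrix.vandermonde (MvPolynomial.X : Fin n → MvPolynomial (Fin n) R)).det.degreeOf j ≤
      n - 1 := by
  refine (degreeOf_det_le (b := fun i => if i = j then n - 1 else 0) fun i l => ?_).trans (by simp)
  rw [Matrix.vandermonde_apply]
  split_ifs with hij
  · rw [hij, MvPolynomial.degreeOf_X_self_pow]
    exact Nat.le_sub_one_of_lt l.isLt
  · rw [MvPolynomial.degreeOf_X_pow_of_ne _ (Ne.symm hij)]

/-- Multiplying `f` by the Vandermonde determinant forces a point where the product does not vanish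
to have distinct coordinates. -/
theorem exists_injective_eval_ne_zero [IsDomain R] {n : ℕ} {f : MvPolynomial (Fin n) R}
    (hf : f ≠ 0) {s : Finset R} (hs : ∀ j, f.degreeOf j + n ≤ #s) :
    ∃ α : Fin n → R, Injective α ∧ MvPolynomial.eval α f ≠ 0 := by
  set V : Matrix (Fin n) (Fin n) (MvPolynomial (Fin n) R) := Matrix.vandermonde MvPolynomial.X
  have hV : V.det ≠ 0 := Matrix.det_vandermonde_ne_zero_iff.mpr MvPolynomial.X_injective
  obtain ⟨α, hα⟩ : ∃ α, MvPolynomial.eval α (f * V.det) ≠ 0 := by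
    by_contra! hzero
    refine mul_ne_zero hf hV (MvPolynomial.eq_zero_of_eval_zero_at_prod_finset _ (fun _ => s)
      (fun j => ?_) fun α _ => hzero α)
    have := MvPolynomial.degreeOf_mul_le j f V.det
    have := degreeOf_det_vandermonde_X_le (R := R) j
    have := hs j
    have := j.pos
    lia
  have hVα : MvPolynomial.eval α V.det = (Matrix.vandermonde α).det := by
    rw [RingHom.map_det]
    congr 1
    ext i l
    simp [V, Matrix.vandermonde_apply]
  rw [map_mul, hVα] at hα
  exact ⟨α, Matrix.det_vandermonde_ne_zero_iff.mp (right_ne_zero_of_mul hα),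
    left_ne_zero_of_mul hα⟩

end DegreeOf

theorem card_filter_mem_lt {σ ι : Type*} [Fintype σ] [Fintype ι] [DecidableEq σ] {k : ℕ}
    (hk : 0 < k) {Z : ι → Finset σ}
    (hint : ∀ I : Finset ι, I.Nonempty → #(I.inf Z) + #I ≤ k) (j : σ) : #{i | j ∈ Z i} < k := by
  rcases (univ.filter fun i => j ∈ Z i).eq_empty_or_nonempty with hempty | hne
  · rwa [hempty, card_empty]
  · have hj : 0 < #((univ.filter fun i => j ∈ Z i).inf Z) :=
      card_pos.mpr ⟨j, mem_inf.mpr fun i hi => (mem_filter.mp hi).2⟩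
    have := hint _ hne
    lia

theorem simplified_gm_mds_of_pairwise_inter_general (n k : ℕ) (hk : 1 ≤ k)
    (Z : Fin k → Finset (Fin n)) (hZ : ∀ i, #(Z i) = k - 1)
    (hint : ∀ I : Finset (Fin k), I.Nonempty → #(I.inf Z) ≤ k - #I)
    (R : Type*) [CommRing R] [IsDomain R] (hR : (n + k - 1 : ℕ) ≤ Cardinal.mk R) :
    ∃ G : Matrix (Fin k) (Fin n) R, (∀ i j, j ∈ Z i → G i j = 0) ∧
      ∀ s : Finset (Fin n), #s = k → LinearIndependent R fun (j : s) (i : Fin k) => G i j := by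
  have hint' : ∀ I : Finset (Fin k), I.Nonempty → #(I.inf Z) + #I ≤ k := fun I hI => by
    have := hint I hI
    have := card_finset_fin_le I
    lia
  set P : Fin k → (MvPolynomial (Fin n) R)[X] := fun i => RootData.poly R (Z i, 0)
  have hdegP : ∀ i, (P i).natDegree < k := fun i => by
    rw [RootData.natDegree_poly, RootData.size, hZ]
    lia
  have hdet : (coeffMatrix P k).det ≠ 0 :=
    det_coeffMatrix_poly_ne_zero (fun i => by rw [hZ]; lia) hint'
  obtain ⟨s, hs⟩ := Cardinal.exists_finset_le_card R _ hR
  obtain ⟨α, hα, hαdet⟩ := exists_injective_eval_ne_zero hdet (s := s) fun j => by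
    have := degreeOf_det_le (M := coeffMatrix P k) fun i l => degreeOf_coeff_poly_le (Z i) j l
    rw [sum_boole, Nat.cast_id] at this
    have := card_filter_mem_lt hk hint' j
    lia
  set p : Fin k → R[X] := fun i => (P i).map (MvPolynomial.eval α)
  refine ⟨.of fun i j => (p i).eval (α j), fun i j hj => ?_, fun t ht => ?_⟩
  · simp [p, P, RootData.poly, Polynomial.map_prod, eval_prod, prod_eq_zero hj]
  · exact linearIndependent_eval (fun i => natDegree_map_le.trans_lt (hdegP i))
      (by rwa [det_coeffMatrix_map]) (by simpa using ht) (hα.comp Subtype.val_injective)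

/-- The Simplified GM-MDS Conjecture holds when the prescribed zero-coordinate sets
`Z i` pairwise intersect in at most one element: there is a `k × n` MDS generator
matrix over any finite field with at least `n + k - 1` elements vanishing exactly on
the prescribed positions. -/
theorem simplified_gm_mds_of_pairwise_inter (n k : ℕ) (hk : 1 ≤ k) (hkn : k ≤ n)
    (Z : Fin k → Finset (Fin n)) (hZ : ∀ i, (Z i).card = k - 1)
    (hint : ∀ I : Finset (Fin k), I.Nonempty → (I.inf Z).card ≤ k - I.card)
    (hpair : ∀ i i' : Fin k, i ≠ i' → (Z i ∩ Z i').card ≤ 1)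
    (F : Type*) [Field F] [Fintype F] (hq : n + k - 1 ≤ Fintype.card F) :
    ∃ G : Matrix (Fin k) (Fin n) F,
      (∀ i j, j ∈ Z i → G i j = 0) ∧
      (∀ s : Finset (Fin n), s.card = k →
        LinearIndependent F (fun j : s => (fun i : Fin k => G i (j : Fin n)))) := by
  exact simplified_gm_mds_of_pairwise_inter_general n k hk Z hZ hint F
    (by rw [Cardinal.mk_fintype]; exact_mod_cast hq)
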